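/- Let 𝓐, 𝓔 ∈ ℂ^{(N+M)×(N+M)} and partition 𝓐 = [𝓐₁ 𝓐₂], 𝓔 = [𝓔₁ 𝓔₂] with 𝓐₁, 𝓔₁ ∈ ℂ^{(N+M)×N} and 𝓐₂, 𝓔₂ ∈ ℂ^{(N+M)×M}. Then there exists an invertible matrix Q ∈ ℂ^{(N+M)×(N+M)} such that Q(𝓐 − s𝓔) is in SSF-I (hence has the same eigenvalues and right deflating subspaces as 𝓐 − s𝓔) if and only if the matrix [𝓔₁ 𝓐₂] is nonsingular; in that case Q = [𝓔₁ 𝓐₂]^{−1} and the SSF-I blocks are given by [[E, −G], [−H, F]] = [𝓔₁ 𝓐₂]^{−1} [𝓐₁ 𝓔₂]. -/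

import Mathlib

open Matrix

/-- A pencil `𝓐 − s𝓔 = [𝓐₁ 𝓐₂] − s[𝓔₁ 𝓔₂]` can be brought into SSF-I by left
multiplication with an invertible matrix `Q` if and only if `[𝓔₁ 𝓐₂]` is
nonsingular, in which case `Q = [𝓔₁ 𝓐₂]⁻¹` works and the SSF-I blocks are given by
`[[E, −G], [−H, F]] = [𝓔₁ 𝓐₂]⁻¹ [𝓐₁ 𝓔₂]`. -/
theorem ssf1_transformation
    (N M : ℕ)
    (𝓐₁ 𝓔₁ : Matrix (Fin N ⊕ Fin M) (Fin N) ℂ)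
    (𝓐₂ 𝓔₂ : Matrix (Fin N ⊕ Fin M) (Fin M) ℂ) :
    ((∃ Q : Matrix (Fin N ⊕ Fin M) (Fin N ⊕ Fin M) ℂ, IsUnit Q ∧
        ∃ (E : Matrix (Fin N) (Fin N) ℂ) (F : Matrix (Fin M) (Fin M) ℂ)
          (G : Matrix (Fin N) (Fin M) ℂ) (H : Matrix (Fin M) (Fin N) ℂ),
          Q * fromCols 𝓐₁ 𝓐₂ =
              fromBlocks E (0 : Matrix (Fin N) (Fin M) ℂ) (-H)
                (1 : Matrix (Fin M) (Fin M) ℂ) ∧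
            Q * fromCols 𝓔₁ 𝓔₂ =
              fromBlocks (1 : Matrix (Fin N) (Fin N) ℂ) (-G)
                (0 : Matrix (Fin M) (Fin N) ℂ) F) ↔
      IsUnit (fromCols 𝓔₁ 𝓐₂)) ∧
    (IsUnit (fromCols 𝓔₁ 𝓐₂) →
      ∃ (E : Matrix (Fin N) (Fin N) ℂ) (F : Matrix (Fin M) (Fin M) ℂ)
        (G : Matrix (Fin N) (Fin M) ℂ) (H : Matrix (Fin M) (Fin N) ℂ),
        fromBlocks E (-G) (-H) F =
            (fromCols 𝓔₁ 𝓐₂)⁻¹ * fromCols 𝓐₁ 𝓔₂ ∧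
          (fromCols 𝓔₁ 𝓐₂)⁻¹ * fromCols 𝓐₁ 𝓐₂ =
            fromBlocks E (0 : Matrix (Fin N) (Fin M) ℂ) (-H)
              (1 : Matrix (Fin M) (Fin M) ℂ) ∧
          (fromCols 𝓔₁ 𝓐₂)⁻¹ * fromCols 𝓔₁ 𝓔₂ =
            fromBlocks (1 : Matrix (Fin N) (Fin N) ℂ) (-G)
              (0 : Matrix (Fin M) (Fin N) ℂ) F) := by
  have key : IsUnit (fromCols 𝓔₁ 𝓐₂) →
      ∃ (E : Matrix (Fin N) (Fin N) ℂ) (F : Matrix (Fin M) (Fin M) ℂ)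
        (G : Matrix (Fin N) (Fin M) ℂ) (H : Matrix (Fin M) (Fin N) ℂ),
        fromBlocks E (-G) (-H) F =
            (fromCols 𝓔₁ 𝓐₂)⁻¹ * fromCols 𝓐₁ 𝓔₂ ∧
          (fromCols 𝓔₁ 𝓐₂)⁻¹ * fromCols 𝓐₁ 𝓐₂ =
            fromBlocks E (0 : Matrix (Fin N) (Fin M) ℂ) (-H)
              (1 : Matrix (Fin M) (Fin M) ℂ) ∧
          (fromCols 𝓔₁ 𝓐₂)⁻¹ * fromCols 𝓔₁ 𝓔₂ =
            fromBlocks (1 : Matrix (Fin N) (Fin N) ℂ) (-G)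
              (0 : Matrix (Fin M) (Fin N) ℂ) F := by
    intro h
    have h1 : (fromCols 𝓔₁ 𝓐₂)⁻¹ * fromCols 𝓔₁ 𝓐₂ = 1 :=
      Matrix.nonsing_inv_mul _ ((Matrix.isUnit_iff_isUnit_det _).1 h)
    generalize (fromCols 𝓔₁ 𝓐₂)⁻¹ = Q at h1 ⊢
    rw [mul_fromCols, ← fromBlocks_one, ← fromCols_fromRows_eq_fromBlocks] at h1
    obtain ⟨hE, hA⟩ := fromCols_inj h1
    refine ⟨(Q * 𝓐₁).toRows₁, (Q * 𝓔₂).toRows₂, -(Q * 𝓔₂).toRows₁, -(Q * 𝓐₁).toRows₂, ?_, ?_, ?_⟩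
    · simp [mul_fromCols, ← fromCols_fromRows_eq_fromBlocks]
    · simp [mul_fromCols, ← fromCols_fromRows_eq_fromBlocks, hA]
    · simp [mul_fromCols, ← fromCols_fromRows_eq_fromBlocks, hE]
  refine ⟨⟨?_, ?_⟩, key⟩
  · rintro ⟨Q, -, E, F, G, H, h1, h2⟩
    rw [mul_fromCols, ← fromCols_fromRows_eq_fromBlocks] at h1 h2
    obtain ⟨-, hA⟩ := fromCols_inj h1
    obtain ⟨hE, -⟩ := fromCols_inj h2
    have h : Q * fromCols 𝓔₁ 𝓐₂ = 1 := by
      rw [mul_fromCols, hA, hE, fromCols_fromRows_eq_fromBlocks, fromBlocks_one]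
    rw [Matrix.isUnit_iff_isUnit_det]
    exact Matrix.isUnit_det_of_left_inverse h
  · intro h
    obtain ⟨E, F, G, H, -, h1, h2⟩ := key h
    exact ⟨_, (Matrix.isUnit_nonsing_inv_iff).2 h, E, F, G, H, h1, h2⟩
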